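/- Let P be a preference function of span s (0 ≤ s < n) over the alphabet A = {0,1,…,q−1} and let I = (I_1,…,I_n) be an arbitrary initial n-word. Then the greedy construction (P,I) halts after finitely many steps, every n-word occurs at most once as a contiguous window of (P,I), and the last n−1 terms of (P,I) are exactly (I_1,…,I_{n−1}). -/

import Mathlib

/-!
Appending a letter only when it creates an `n`-word not seen before keeps all `n`-words of the
sequence distinct. There are `q ^ n` words of length `n`, so the construction halts after at most
`q ^ n` steps.

Let `l` be the sequence reached when it halts and `v` the word formed by its last `n - 1` terms.
Every occurrence of `v` in `l` other than a final one is followed by a letter, and every occurrence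
other than an initial one is preceded by a letter. Halting means that all the words `v c` occur, so
with the final occurrence `v` occurs at least `q + 1` times. Each of the words `b v` occurs at most
once, so at most `q` occurrences of `v` are preceded by a letter. Hence one of them is initial.
-/

namespace PaperDB

/-- The last `s` entries of `l`. -/
def lastN {α : Type*} (s : ℕ) (l : List α) : List α := l.drop (l.length - s)

/-- The digit appended by the greedy rule, if any: the most preferred digit `c`
(according to the preference function `P`, evaluated at the last `s` digits,
`P x 0` being the most preferred digit) such that the `n`-window created by
appending `c` has not yet occurred as a contiguous subword. -/
def nextDigit (q s n : ℕ) (P : List (ZMod q) → Fin q → ZMod q)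
    (l : List (ZMod q)) : Option (ZMod q) :=
  ((List.finRange q).map (fun i => P (lastN s l) i)).find?
    (fun c => !decide ((lastN (n - 1) l ++ [c]) <:+: l))

/-- Fuel-bounded greedy extension. -/
def greedyAux (q s n : ℕ) (P : List (ZMod q) → Fin q → ZMod q) :
    ℕ → List (ZMod q) → List (ZMod q)
  | 0, l => l
  | f + 1, l =>
    match nextDigit q s n P l with
    | none => l
    | some c => greedyAux q s n P f (l ++ [c])

/-- The greedy sequence `(P, I)`: fuel `q ^ n` provably suffices for the
construction to halt, since every `n`-word occurs at most once. -/
def greedy (q s n : ℕ) (P : List (ZMod q) → Fin q → ZMod q)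
    (I : List (ZMod q)) : List (ZMod q) :=
  greedyAux q s n P (q ^ n) I

/-- The number of occurrences of `w` as a length-`n` contiguous window of `l`. -/
def windowCount (q n : ℕ) (w l : List (ZMod q)) : ℕ :=
  ((List.range (l.length + 1 - n)).filter
    (fun i => decide ((l.drop i).take n = w))).length

/-- `P` is a preference function (of span `s`): it assigns to every `s`-word a
permutation of the alphabet `ZMod q`. -/
def IsPrefFun (q s : ℕ) (P : List (ZMod q) → Fin q → ZMod q) : Prop :=
  ∀ x : List (ZMod q), x.length = s → Function.Bijective (P x)

theorem length_lastN {α : Type*} {k : ℕ} {l : List α} (h : k ≤ l.length) :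
    (lastN k l).length = k := by
  rw [lastN, List.length_drop]
  omega

section Occurrences

variable {α : Type*} [DecidableEq α]

/-- The number of positions at which `w` occurs as a contiguous subword of `l`. An occurrence is
encoded as a suffix of `l` with prefix `w`, so the empty word occurs `l.length + 1` times. -/
def numOccurrences (w l : List α) : ℕ := l.tails.countP (w <+: ·)

theorem numOccurrences_nil_right (w : List α) :
    numOccurrences w [] = if w = [] then 1 else 0 := by
  simp [numOccurrences, List.countP_singleton]

theorem numOccurrences_cons_right (w : List α) (a : α) (l : List α) :
    numOccurrences w (a :: l) = numOccurrences w l + if w <+: a :: l then 1 else 0 := by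
  simp [numOccurrences, List.countP_cons]

theorem numOccurrences_concat_right (w l : List α) (a : α) :
    numOccurrences w (l ++ [a]) = numOccurrences w l + if w <:+ l ++ [a] then 1 else 0 := by
  induction l with
  | nil =>
    have h : w <+: [a] ↔ w <:+ [a] := by
      rw [List.prefix_cons_iff, List.suffix_cons_iff]
      simp [or_comm]
    simp only [List.nil_append, numOccurrences_cons_right, h]
  | cons b l ih =>
    have h_prefix : (if w <+: b :: (l ++ [a]) then 1 else 0) =
        (if w = b :: (l ++ [a]) then 1 else 0) + if w <+: b :: l then 1 else 0 := by
      have h_disjoint : w <+: b :: l → w ≠ b :: (l ++ [a]) := by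
        rintro h rfl
        simpa using h.length_le
      have := List.prefix_concat_iff (l₁ := w) (l₂ := b :: l) (a := a)
      grind
    have h_suffix : (if w <:+ b :: (l ++ [a]) then 1 else 0) =
        (if w = b :: (l ++ [a]) then 1 else 0) + if w <:+ l ++ [a] then 1 else 0 := by
      have h_disjoint : w <:+ l ++ [a] → w ≠ b :: (l ++ [a]) := by
        rintro h rfl
        simpa using h.length_le
      have := List.suffix_cons_iff (l₁ := w) (a := b) (l₂ := l ++ [a])
      grind
    rw [List.cons_append, numOccurrences_cons_right, numOccurrences_cons_right, ih, h_prefix,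
      h_suffix]
    ring

theorem numOccurrences_pos_iff {w l : List α} : 0 < numOccurrences w l ↔ w <:+: l := by
  simp [numOccurrences, List.countP_pos_iff, List.infix_iff_prefix_suffix, and_comm]

theorem numOccurrences_le (w l : List α) : numOccurrences w l ≤ l.length + 1 - w.length := by
  induction l with
  | nil => grind [numOccurrences_nil_right]
  | cons a l ih =>
    rw [numOccurrences_cons_right, List.length_cons]
    split_ifs with h
    · have := h.length_le
      grind
    · omega

variable [Fintype α]

theorem numOccurrences_eq_sum_cons (v l : List α) :
    numOccurrences v l = ∑ b, numOccurrences (b :: v) l + if v <+: l then 1 else 0 := by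
  induction l with
  | nil => simp [numOccurrences_nil_right]
  | cons a l ih =>
    have h_sum : ∑ b, numOccurrences (b :: v) (a :: l) =
        ∑ b, numOccurrences (b :: v) l + if v <+: l then 1 else 0 := by
      simp [numOccurrences_cons_right, List.cons_prefix_cons, Finset.sum_add_distrib, ite_and]
    rw [numOccurrences_cons_right, h_sum, ih]

theorem numOccurrences_eq_sum_concat (v l : List α) :
    numOccurrences v l = ∑ c, numOccurrences (v ++ [c]) l + if v <:+ l then 1 else 0 := by
  induction l using List.reverseRecOn with
  | nil => simp [numOccurrences_nil_right]
  | append_singleton l a ih =>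
    have h_sum : ∑ c, numOccurrences (v ++ [c]) (l ++ [a]) =
        ∑ c, numOccurrences (v ++ [c]) l + if v <:+ l then 1 else 0 := by
      have h_suffix (c : α) : v ++ [c] <:+ l ++ [a] ↔ c = a ∧ v <:+ l := by
        rw [← List.reverse_prefix]
        simp [List.cons_prefix_cons]
      simp [numOccurrences_concat_right, h_suffix, Finset.sum_add_distrib, ite_and]
    rw [numOccurrences_concat_right, h_sum, ih]

theorem sum_numOccurrences (n : ℕ) (l : List α) :
    ∑ w : List.Vector α n, numOccurrences w.toList l = l.length + 1 - n := by
  have h_prefixes (t : List α) :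
      (∑ w : List.Vector α n, if w.toList <+: t then 1 else 0) = if n ≤ t.length then 1 else 0 := by
    split_ifs with h
    · let u : List.Vector α n := ⟨t.take n, List.length_take_of_le h⟩
      have h_iff (w : List.Vector α n) : w.toList <+: t ↔ w = u := by
        rw [List.prefix_iff_eq_take, w.toList_length, ← List.Vector.toList_injective.eq_iff]
        rfl
      simp only [h_iff, Finset.sum_ite_eq', Finset.mem_univ, if_true]
    · refine Finset.sum_eq_zero fun w _ => if_neg fun hw => h ?_
      simpa using hw.length_le
  induction l with
  | nil =>
    have h_empty := h_prefixes []
    simp only [List.prefix_nil] at h_empty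
    simp only [numOccurrences_nil_right, h_empty]
    grind
  | cons a l ih =>
    simp only [numOccurrences_cons_right, Finset.sum_add_distrib, ih, h_prefixes, List.length_cons]
    grind

end Occurrences

section NoRepeatedWord

variable {α : Type*} [DecidableEq α] {n : ℕ} {l : List α}

/-- Every `n`-word occurs at most once in `l`: the invariant of the greedy construction. -/
def NoRepeatedWord (n : ℕ) (l : List α) : Prop :=
  ∀ w : List α, w.length = n → numOccurrences w l ≤ 1

theorem noRepeatedWord_of_length_le (h : l.length ≤ n) : NoRepeatedWord n l := by
  intro w hw
  have := numOccurrences_le w l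
  omega

theorem NoRepeatedWord.concat (h : NoRepeatedWord n l) (hn : 0 < n) {c : α}
    (hc : ¬ lastN (n - 1) l ++ [c] <:+: l) : NoRepeatedWord n (l ++ [c]) := by
  intro w hw
  rw [numOccurrences_concat_right]
  split_ifs with h_suffix
  · have h_last : w = lastN (n - 1) l ++ [c] := by
      obtain rfl | ⟨t, rfl, ht⟩ := List.suffix_concat_iff.1 h_suffix
      · exact absurd hw hn.ne
      · have ht_length : t.length = n - 1 := by
          rw [← hw, List.length_append, List.length_singleton, Nat.add_sub_cancel]
        rw [List.suffix_iff_eq_drop.1 ht, ht_length, lastN]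
    have h_new : ¬ 0 < numOccurrences w l := by rwa [numOccurrences_pos_iff, h_last]
    omega
  · exact h w hw

theorem NoRepeatedWord.length_le [Fintype α] (h : NoRepeatedWord n l) :
    l.length + 1 - n ≤ Fintype.card α ^ n :=
  calc l.length + 1 - n
      = ∑ w : List.Vector α n, numOccurrences w.toList l := (sum_numOccurrences n l).symm
    _ ≤ ∑ _w : List.Vector α n, 1 := Finset.sum_le_sum fun w _ => h _ w.toList_length
    _ = Fintype.card α ^ n := by simp

theorem NoRepeatedWord.prefix_of_suffix [Finite α] {v : List α}
    (h : NoRepeatedWord (v.length + 1) l) (hv : v <:+ l) (hvc : ∀ c, v ++ [c] <:+: l) :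
    v <+: l := by
  cases nonempty_fintype α
  by_contra h_not_prefix
  have h_lower : Fintype.card α + 1 ≤ numOccurrences v l :=
    calc Fintype.card α + 1
        = ∑ _c : α, 1 + 1 := by simp
      _ ≤ ∑ c, numOccurrences (v ++ [c]) l + 1 := by
        gcongr with c
        exact numOccurrences_pos_iff.2 (hvc c)
      _ = numOccurrences v l := by rw [numOccurrences_eq_sum_concat v, if_pos hv]
  have h_upper : numOccurrences v l ≤ Fintype.card α :=
    calc numOccurrences v l
        = ∑ b, numOccurrences (b :: v) l := by
          rw [numOccurrences_eq_sum_cons, if_neg h_not_prefix, add_zero]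
      _ ≤ ∑ _b : α, 1 := Finset.sum_le_sum fun b _ => h _ rfl
      _ = Fintype.card α := by simp
  omega

theorem NoRepeatedWord.take_suffix [Finite α] (h : NoRepeatedWord n l) (hn : 0 < n)
    (hl : n ≤ l.length) (hc : ∀ c, lastN (n - 1) l ++ [c] <:+: l) : l.take (n - 1) <:+ l := by
  have h_length : (lastN (n - 1) l).length = n - 1 := length_lastN (by omega)
  have h_suffix : lastN (n - 1) l <:+ l := List.drop_suffix _ _
  have h_prefix : lastN (n - 1) l <+: l := by
    refine prefix_of_suffix ?_ h_suffix hc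
    rwa [h_length, Nat.sub_add_cancel hn]
  have h_eq : lastN (n - 1) l = l.take (n - 1) := by
    simpa only [h_length] using List.prefix_iff_eq_take.1 h_prefix
  rwa [← h_eq]

end NoRepeatedWord

theorem windowCount_eq_numOccurrences {q n : ℕ} {w : List (ZMod q)} (hw : w.length = n)
    (l : List (ZMod q)) : windowCount q n w l = numOccurrences w l := by
  rw [windowCount, ← List.countP_eq_length_filter]
  induction l with
  | nil => subst hw; cases w <;> simp [numOccurrences_nil_right]
  | cons a l ih =>
    have h_window : w <+: a :: l ↔ (a :: l).take n = w := by
      rw [List.prefix_iff_eq_take, hw, eq_comm]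
    rw [numOccurrences_cons_right, ← ih, List.length_cons]
    rcases Nat.lt_or_ge (l.length + 1) n with h_short | h_long
    · have h_not_prefix : ¬ w <+: a :: l := fun h => by
        have := h.length_le
        grind
      simp [h_not_prefix, Nat.sub_eq_zero_of_le h_short, Nat.sub_eq_zero_of_le h_short.le]
    · rw [Nat.succ_sub h_long, List.range_succ_eq_map, List.countP_cons, List.countP_map]
      simp [h_window, Function.comp_def]

section Greedy

variable {q s n : ℕ} {P : List (ZMod q) → Fin q → ZMod q} {l : List (ZMod q)}

theorem not_infix_of_nextDigit_eq_some {c : ZMod q} (h : nextDigit q s n P l = some c) :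
    ¬ lastN (n - 1) l ++ [c] <:+: l := by
  simpa using List.find?_some h

theorem nextDigit_eq_none_iff (hP : Function.Surjective (P (lastN s l))) :
    nextDigit q s n P l = none ↔ ∀ c, lastN (n - 1) l ++ [c] <:+: l := by
  simp [nextDigit, hP.forall]

theorem greedyAux_of_nextDigit_eq_none (h : nextDigit q s n P l = none) (f : ℕ) :
    greedyAux q s n P f l = l := by
  cases f <;> simp [greedyAux, h]

theorem greedyAux_add (f g : ℕ) (l : List (ZMod q)) :
    greedyAux q s n P (f + g) l = greedyAux q s n P g (greedyAux q s n P f l) := by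
  induction f generalizing l with
  | zero => rw [Nat.zero_add, greedyAux]
  | succ f ih =>
    rw [Nat.add_right_comm]
    rcases h : nextDigit q s n P l with _ | c
    · simp only [greedyAux_of_nextDigit_eq_none h]
    · simp only [greedyAux, h, ih]

theorem prefix_greedyAux (f : ℕ) (l : List (ZMod q)) : l <+: greedyAux q s n P f l := by
  fun_induction greedyAux q s n P f l with
  | case1 | case2 => exact List.prefix_rfl
  | case3 _ l c _ ih => exact (List.prefix_append l [c]).trans ih

theorem noRepeatedWord_greedyAux (h : NoRepeatedWord n l) (hn : 0 < n) (f : ℕ) :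
    NoRepeatedWord n (greedyAux q s n P f l) := by
  fun_induction greedyAux q s n P f l with
  | case1 | case2 => exact h
  | case3 _ _ _ hc ih => exact ih (h.concat hn (not_infix_of_nextDigit_eq_some hc))

theorem nextDigit_greedyAux_eq_none_or_length_greedyAux (f : ℕ) (l : List (ZMod q)) :
    nextDigit q s n P (greedyAux q s n P f l) = none ∨
      (greedyAux q s n P f l).length = l.length + f := by
  fun_induction greedyAux q s n P f l with
  | case1 => exact Or.inr rfl
  | case2 _ _ h => exact Or.inl h
  | case3 f l c _ ih =>
    refine ih.imp_right fun h_length => ?_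
    rw [h_length, List.length_append, List.length_singleton]
    omega

theorem NoRepeatedWord.nextDigit_greedy_eq_none [NeZero q] (h : NoRepeatedWord n l) (hn : 0 < n)
    (hl : n ≤ l.length) : nextDigit q s n P (greedy q s n P l) = none := by
  refine (nextDigit_greedyAux_eq_none_or_length_greedyAux _ l).resolve_right fun h_length => ?_
  have h_bound := (noRepeatedWord_greedyAux (s := s) (P := P) h hn (q ^ n)).length_le
  rw [ZMod.card] at h_bound
  omega

end Greedy

/-- The word `lastN s l` is all of `l` once `l.length ≤ s`, so for large `s` the preferences may
depend on the whole history. -/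
theorem golomb_lemma_general (q s n : ℕ) (hn : 0 < n) (P : List (ZMod q) → Fin q → ZMod q)
    (hP : ∀ l : List (ZMod q), n ≤ l.length → Function.Surjective (P (lastN s l)))
    (I : List (ZMod q)) (hI : n ≤ I.length) (hI_words : NoRepeatedWord n I) :
    (∀ f, q ^ n ≤ f → greedyAux q s n P f I = greedy q s n P I) ∧
    nextDigit q s n P (greedy q s n P I) = none ∧
    (∀ w : List (ZMod q), w.length = n → windowCount q n w (greedy q s n P I) ≤ 1) ∧
    I.take (n - 1) <:+ greedy q s n P I := by
  have : NeZero q := ⟨(hP I hI 0).choose.pos.ne'⟩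
  set l := greedy q s n P I
  have h_halted : nextDigit q s n P l = none := hI_words.nextDigit_greedy_eq_none hn hI
  have h_words : NoRepeatedWord n l := noRepeatedWord_greedyAux hI_words hn (q ^ n)
  have hIl : I <+: l := prefix_greedyAux (q ^ n) I
  have hl : n ≤ l.length := hI.trans hIl.length_le
  refine ⟨fun f hf => ?_, h_halted, fun w hw => ?_, ?_⟩
  · obtain ⟨g, rfl⟩ := Nat.exists_eq_add_of_le hf
    rw [greedyAux_add]
    exact greedyAux_of_nextDigit_eq_none h_halted g
  · exact (windowCount_eq_numOccurrences hw l).trans_le (h_words w hw)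
  · have h_take : I.take (n - 1) = l.take (n - 1) := by
      refine (hIl.take (n - 1)).eq_of_length ?_
      rw [List.length_take_of_le (by omega), List.length_take_of_le (by omega)]
    rw [h_take]
    exact h_words.take_suffix hn hl ((nextDigit_eq_none_iff (hP l hl)).1 h_halted)

/-- Golomb's lemma for preference functions.
For a preference function `P` of span `s` (`0 ≤ s < n`) and an arbitrary initial
`n`-word `I`, the greedy construction `(P,I)` halts after finitely many steps
(indeed within `q ^ n` steps, after which nothing more can be appended),
every `n`-word occurs at most once as a contiguous window of `(P,I)`,
and `(P,I)` ends with the pattern `(I_1,…,I_{n-1})`. -/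
theorem golomb_lemma (q s n : ℕ) (hq : 2 ≤ q) (hs : s < n)
    (P : List (ZMod q) → Fin q → ZMod q) (hP : IsPrefFun q s P)
    (I : List (ZMod q)) (hI : I.length = n) :
    (∀ f, q ^ n ≤ f → greedyAux q s n P f I = greedy q s n P I) ∧
    nextDigit q s n P (greedy q s n P I) = none ∧
    (∀ w : List (ZMod q), w.length = n → windowCount q n w (greedy q s n P I) ≤ 1) ∧
    I.take (n - 1) <:+ greedy q s n P I :=
  golomb_lemma_general q s n (by omega) P
    (fun _ hl => (hP _ (length_lastN (by omega))).surjective) I hI.ge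
    (noRepeatedWord_of_length_le hI.le)

end PaperDB
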